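/- arXiv:2307.10418 — 2 statements merged into one kernel-verified Lean document; each statement's English description precedes it below -/
import Mathlib

section
/- Let 𝔤 be a finite-dimensional complex Lie algebra, let f, g ∈ S(𝔤) be semi-invariants (with weights χ_f, χ_g ∈ 𝔤*), and let a ∈ 𝔤*. Then for all λ, μ ∈ ℂ the shifted polynomials F(x) = f(a + λx) and G(x) = g(a + μx) are in involution with respect to the frozen argument bracket at a: {F, G}_a(x) = 0 for every x ∈ 𝔤*. -/
/-- A function on the dual space `𝔤* ≅ L →L[ℂ] ℂ` is a polynomial function
(i.e. corresponds to an element of the symmetric algebra `S(𝔤)`) if it lies in the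
`ℂ`-subalgebra of functions generated by the evaluations `x ↦ ⟨x, ξ⟩`, `ξ ∈ 𝔤`. -/
def IsPolyFun (L : Type*) [NormedAddCommGroup L] [NormedSpace ℂ L]
    (p : (L →L[ℂ] ℂ) → ℂ) : Prop :=
  p ∈ Algebra.adjoin ℂ (Set.range fun ξ : L => fun x : L →L[ℂ] ℂ => x ξ)

/-- `dp` represents the differential of `p : 𝔤* → ℂ`, with `dp x ∈ 𝔤` identified with a
linear functional on `𝔤*` via the canonical isomorphism `𝔤 ≅ 𝔤**`:
`(fderiv ℂ p x) v = ⟨v, dp x⟩` for all `v ∈ 𝔤*`. -/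
def RepDeriv (L : Type*) [NormedAddCommGroup L] [NormedSpace ℂ L]
    (p : (L →L[ℂ] ℂ) → ℂ) (dp : (L →L[ℂ] ℂ) → L) : Prop :=
  ∀ x v : L →L[ℂ] ℂ, fderiv ℂ p x v = v (dp x)

/-- The bilinear map `B` is a Lie bracket on the complex vector space `L` (which carries a
norm only in order to speak about differentials and analyticity; in finite dimension all
norms are equivalent): `B` is alternating and satisfies the Jacobi identity. -/
def IsLieBracket (L : Type*) [NormedAddCommGroup L] [NormedSpace ℂ L]
    (B : L →ₗ[ℂ] L →ₗ[ℂ] L) : Prop :=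
  (∀ ξ : L, B ξ ξ = 0) ∧
    ∀ ξ η ζ : L, B ξ (B η ζ) = B (B ξ η) ζ + B η (B ξ ζ)

/-- `g ∈ S(𝔤)` is a semi-invariant with weight `χ ∈ 𝔤*`:
`⟨x, [ξ, dg(x)]⟩ = χ(ξ) · g(x)` for all `ξ ∈ 𝔤`, `x ∈ 𝔤*`. -/
def IsSemiInvariant (L : Type*) [NormedAddCommGroup L] [NormedSpace ℂ L]
    (B : L →ₗ[ℂ] L →ₗ[ℂ] L) (g : (L →L[ℂ] ℂ) → ℂ) (χ : L →L[ℂ] ℂ) : Prop :=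
  IsPolyFun L g ∧ g ≠ 0 ∧
    ∃ dg : (L →L[ℂ] ℂ) → L, RepDeriv L g dg ∧
      ∀ (ξ : L) (x : L →L[ℂ] ℂ), x (B ξ (dg x)) = χ ξ * g x

/-! Let `u = df(p)` and `v = dg(q)`. Semi-invariance of `f` at `p` and of `g` at `q` gives
`⟨p, [u, v]⟩ = -χ_f(v) f(p)` and `⟨q, [u, v]⟩ = χ_g(u) g(q)`. Both vanish, because a semi-invariant
is constant along the weight of every semi-invariant. For `p = a + λx` and `q = a + μx` with
`λ ≠ μ`, the point `a` is a linear combination of `p` and `q`, so `⟨a, [u, v]⟩ = 0`; the case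
`λ = μ` follows by continuity in `μ`.

For the constancy, comparing the two expressions of `{f, g}` gives `g ∂f = -(∂'g) f`, where `∂` and
`∂'` are the derivatives along `χ_g` and `χ_f`. Moreover `{g, g} = 0` reads `g ∂g = 0`, so `g`, and
with it `∂'g`, does not change along `χ_g`. On a line in that direction on which `g ≠ 0` the
polynomial `∂f` is thus a constant multiple of `f`, hence zero by comparing degrees. -/

open Polynomial

section DirectionalDerivative

variable {𝕜 E F : Type*} [NormedAddCommGroup E] [NormedAddCommGroup F]

theorem hasDerivAt_comp_add_smul [NontriviallyNormedField 𝕜] [NormedSpace 𝕜 E] [NormedSpace 𝕜 F]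
    {f : E → F} {x v : E} {t : 𝕜} (hf : DifferentiableAt 𝕜 f (x + t • v)) :
    HasDerivAt (fun s : 𝕜 => f (x + s • v)) (fderiv 𝕜 f (x + t • v) v) t := by
  have hline : HasDerivAt (fun s : 𝕜 => x + s • v) v t := by
    simpa using ((hasDerivAt_id t).smul_const v).const_add x
  exact hf.hasFDerivAt.comp_hasDerivAt t hline

variable [RCLike 𝕜] [NormedSpace 𝕜 E] [NormedSpace 𝕜 F] {f : E → F} {v : E}

theorem apply_add_smul_eq_of_fderiv_apply_eq_zero (hf : Differentiable 𝕜 f)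
    (hv : ∀ x, fderiv 𝕜 f x v = 0) (x : E) (t : 𝕜) : f (x + t • v) = f x := by
  have hderiv (s : 𝕜) := hasDerivAt_comp_add_smul (hf (x + s • v))
  have h := is_const_of_deriv_eq_zero (fun s => (hderiv s).differentiableAt)
    (fun s => (hderiv s).deriv.trans (hv _)) t 0
  simpa using h

theorem fderiv_add_smul_eq_of_fderiv_apply_eq_zero (hf : Differentiable 𝕜 f)
    (hv : ∀ x, fderiv 𝕜 f x v = 0) (x : E) (t : 𝕜) :
    fderiv 𝕜 f (x + t • v) = fderiv 𝕜 f x := by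
  rw [← fderiv_comp_add_right]
  congr 1
  exact funext fun y => apply_add_smul_eq_of_fderiv_apply_eq_zero hf hv y t

end DirectionalDerivative

theorem derivative_eq_zero_of_C_mul_derivative_eq {R : Type*} [Semiring R] [NoZeroDivisors R]
    {P : R[X]} {b c : R} (hb : b ≠ 0) (h : C b * derivative P = C c * P) : derivative P = 0 := by
  by_contra hP'
  have hP : P ≠ 0 := ne_of_apply_ne derivative (by simpa using hP')
  have hc : c ≠ 0 := by
    rintro rfl
    simp [hb, hP'] at h
  have hdeg := congrArg degree h
  rw [degree_C_mul hb, degree_C_mul hc] at hdeg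
  exact (degree_derivative_lt hP).ne hdeg

section LiePoisson

variable {L : Type*} [NormedAddCommGroup L] [NormedSpace ℂ L]

namespace RepDeriv

variable {p : (L →L[ℂ] ℂ) → ℂ} {dp dp' : (L →L[ℂ] ℂ) → L}

theorem unique (h : RepDeriv L p dp) (h' : RepDeriv L p dp') : dp = dp' :=
  funext fun x => (SeparatingDual.eq_iff_forall_dual_eq (R := ℂ)).mpr fun v =>
    (h x v).symm.trans (h' x v)

theorem comp_add_smul (h : RepDeriv L p dp) (a : L →L[ℂ] ℂ) (c : ℂ) :
    RepDeriv L (fun x => p (a + c • x)) fun x => c • dp (a + c • x) := fun x v => by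
  rw [fderiv_comp_smul (f := fun y => p (a + y)), fderiv_comp_add_left, smul_apply,
    h, map_smul]

end RepDeriv

namespace IsPolyFun

variable {p q : (L →L[ℂ] ℂ) → ℂ}

theorem add (hp : IsPolyFun L p) (hq : IsPolyFun L q) : IsPolyFun L fun x => p x + q x :=
  Subalgebra.add_mem _ hp hq

theorem mul (hp : IsPolyFun L p) (hq : IsPolyFun L q) : IsPolyFun L fun x => p x * q x :=
  Subalgebra.mul_mem _ hp hq

theorem differentiable (hp : IsPolyFun L p) : Differentiable ℂ p := by
  induction hp using Algebra.adjoin_induction with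
  | mem _ hξ =>
    obtain ⟨ξ, rfl⟩ := hξ
    exact (ContinuousLinearMap.apply ℂ ℂ ξ).differentiable
  | algebraMap c => exact differentiable_const c
  | add _ _ _ _ hp hq => exact hp.add hq
  | mul _ _ _ _ hp hq => exact hp.mul hq

theorem exists_repDeriv_forall_isPolyFun_apply (hp : IsPolyFun L p) :
    ∃ dp, RepDeriv L p dp ∧ ∀ φ : L →ₗ[ℂ] ℂ, IsPolyFun L fun x => φ (dp x) := by
  induction hp using Algebra.adjoin_induction with
  | mem _ hξ =>
    obtain ⟨ξ, rfl⟩ := hξ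
    refine ⟨fun _ => ξ, fun x v => ?_, fun φ => Subalgebra.algebraMap_mem _ (φ ξ)⟩
    exact congrArg (· v) (ContinuousLinearMap.apply ℂ ℂ ξ).fderiv
  | algebraMap c =>
    refine ⟨0, fun x v => ?_, fun φ => ?_⟩
    · have hderiv : fderiv ℂ (algebraMap ℂ ((L →L[ℂ] ℂ) → ℂ) c) x = 0 := fderiv_const_apply c
      simp [hderiv]
    · exact Subalgebra.algebraMap_mem _ (φ 0)
  | add p q hp hq ihp ihq =>
    obtain ⟨dp, hdp, hdp_poly⟩ := ihp
    obtain ⟨dq, hdq, hdq_poly⟩ := ihq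
    refine ⟨dp + dq, fun x v => ?_, fun φ => ?_⟩
    · rw [fderiv_add (differentiable hp x) (differentiable hq x)]
      simp [hdp x v, hdq x v]
    · simpa using (hdp_poly φ).add (hdq_poly φ)
  | mul p q hp hq ihp ihq =>
    obtain ⟨dp, hdp, hdp_poly⟩ := ihp
    obtain ⟨dq, hdq, hdq_poly⟩ := ihq
    refine ⟨p • dq + q • dp, fun x v => ?_, fun φ => ?_⟩
    · rw [fderiv_mul (differentiable hp x) (differentiable hq x)]
      simp [hdp x v, hdq x v]
    · simpa using (mul hp (hdq_poly φ)).add (mul hq (hdp_poly φ))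

theorem exists_repDeriv (hp : IsPolyFun L p) : ∃ dp, RepDeriv L p dp :=
  hp.exists_repDeriv_forall_isPolyFun_apply.imp fun _ h => h.1

theorem apply_repDeriv {dp : (L →L[ℂ] ℂ) → L} (hp : IsPolyFun L p) (hdp : RepDeriv L p dp)
    (φ : L →ₗ[ℂ] ℂ) : IsPolyFun L fun x => φ (dp x) := by
  obtain ⟨dp', hdp', hpoly⟩ := hp.exists_repDeriv_forall_isPolyFun_apply
  exact hdp.unique hdp' ▸ hpoly φ

theorem exists_polynomial_eval_eq (hp : IsPolyFun L p) (x v : L →L[ℂ] ℂ) :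
    ∃ P : ℂ[X], ∀ t, P.eval t = p (x + t • v) := by
  induction hp using Algebra.adjoin_induction with
  | mem _ hξ =>
    obtain ⟨ξ, rfl⟩ := hξ
    exact ⟨C (x ξ) + X * C (v ξ), fun t => by simp [mul_comm t]⟩
  | algebraMap c => exact ⟨C c, fun t => by simp⟩
  | add _ _ _ _ hp hq =>
    obtain ⟨P, hP⟩ := hp
    obtain ⟨Q, hQ⟩ := hq
    exact ⟨P + Q, fun t => by simp [hP, hQ]⟩
  | mul _ _ _ _ hp hq =>
    obtain ⟨P, hP⟩ := hp
    obtain ⟨Q, hQ⟩ := hq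
    exact ⟨P * Q, fun t => by simp [hP, hQ]⟩

theorem eval_derivative_eq (hp : IsPolyFun L p) {x v : L →L[ℂ] ℂ} {P : ℂ[X]}
    (hP : ∀ t, P.eval t = p (x + t • v)) (t : ℂ) :
    P.derivative.eval t = fderiv ℂ p (x + t • v) v := by
  have h := hasDerivAt_comp_add_smul (hp.differentiable (x + t • v))
  simp only [← hP] at h
  exact (P.hasDerivAt t).unique h

theorem eq_zero_or_eq_zero_of_mul_eq_zero (hp : IsPolyFun L p) (hq : IsPolyFun L q)
    (h : p * q = 0) : p = 0 ∨ q = 0 := by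
  by_contra! hne
  obtain ⟨y, hy⟩ := Function.ne_iff.mp hne.1
  obtain ⟨z, hz⟩ := Function.ne_iff.mp hne.2
  obtain ⟨P, hP⟩ := hp.exists_polynomial_eval_eq y (z - y)
  obtain ⟨Q, hQ⟩ := hq.exists_polynomial_eval_eq y (z - y)
  have hPQ : P * Q = 0 := Polynomial.funext fun t => by
    simpa [hP, hQ] using congrFun h (y + t • (z - y))
  rcases mul_eq_zero.mp hPQ with rfl | rfl
  · exact hy (by simpa [zero_smul ℂ (z - y)] using (hP 0).symm)
  · exact hz (by simpa using (hQ 1).symm)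

end IsPolyFun

namespace IsSemiInvariant

variable {B : L →ₗ[ℂ] L →ₗ[ℂ] L} {f g : (L →L[ℂ] ℂ) → ℂ} {χf χg : L →L[ℂ] ℂ}
  {df dg : (L →L[ℂ] ℂ) → L}

theorem apply_bracket (hg : IsSemiInvariant L B g χg) (hdg : RepDeriv L g dg) (ξ : L)
    (x : L →L[ℂ] ℂ) : x (B ξ (dg x)) = χg ξ * g x := by
  obtain ⟨-, -, dg', hdg', h⟩ := hg
  exact hdg.unique hdg' ▸ h ξ x

theorem fderiv_weight_self (hB : B.IsAlt) (hg : IsSemiInvariant L B g χg)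
    (x : L →L[ℂ] ℂ) : fderiv ℂ g x χg = 0 := by
  obtain ⟨dg, hdg⟩ := hg.1.exists_repDeriv
  have hmul : (fun y => χg (dg y)) * g = 0 := funext fun y => by
    simpa [hB.self_eq_zero] using (hg.apply_bracket hdg (dg y) y).symm
  have hzero := (hg.1.apply_repDeriv hdg χg.toLinearMap).eq_zero_or_eq_zero_of_mul_eq_zero hg.1 hmul
  rw [hdg]
  exact congrFun (hzero.resolve_right hg.2.1) x

theorem mul_fderiv_weight (hB : B.IsAlt) (hf : IsSemiInvariant L B f χf)
    (hg : IsSemiInvariant L B g χg) (x : L →L[ℂ] ℂ) :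
    g x * fderiv ℂ f x χg = -fderiv ℂ g x χf * f x := by
  obtain ⟨df, hdf⟩ := hf.1.exists_repDeriv
  obtain ⟨dg, hdg⟩ := hg.1.exists_repDeriv
  calc g x * fderiv ℂ f x χg = x (B (df x) (dg x)) := by
        rw [hg.apply_bracket hdg, hdf, mul_comm]
    _ = -x (B (dg x) (df x)) := by rw [← hB.neg, map_neg]
    _ = -fderiv ℂ g x χf * f x := by rw [hf.apply_bracket hdf, hdg, neg_mul]

theorem mul_fderiv_weight_eq_zero (hB : B.IsAlt) (hf : IsSemiInvariant L B f χf)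
    (hg : IsSemiInvariant L B g χg) (x : L →L[ℂ] ℂ) : g x * fderiv ℂ f x χg = 0 := by
  have hg_diff := hg.1.differentiable
  have hg_self := hg.fderiv_weight_self hB
  obtain ⟨P, hP⟩ := hf.1.exists_polynomial_eval_eq x χg
  have hP' := hf.1.eval_derivative_eq hP
  have hprop : C (g x) * derivative P = C (-fderiv ℂ g x χf) * P := Polynomial.funext fun t => by
    have h := hf.mul_fderiv_weight hB hg (x + t • χg)
    rw [apply_add_smul_eq_of_fderiv_apply_eq_zero hg_diff hg_self,
      fderiv_add_smul_eq_of_fderiv_apply_eq_zero hg_diff hg_self] at h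
    rwa [eval_mul, eval_mul, eval_C, eval_C, hP, hP']
  refine mul_eq_zero.mpr (or_iff_not_imp_left.mpr fun hgx => ?_)
  simpa [derivative_eq_zero_of_C_mul_derivative_eq hgx hprop, zero_smul ℂ χg] using (hP' 0).symm

theorem fderiv_weight (hB : B.IsAlt) (hf : IsSemiInvariant L B f χf)
    (hg : IsSemiInvariant L B g χg) (x : L →L[ℂ] ℂ) : fderiv ℂ f x χg = 0 := by
  obtain ⟨df, hdf⟩ := hf.1.exists_repDeriv
  have hmul : g * (fun y => χg (df y)) = 0 := funext fun y => by
    simpa [← hdf y] using hf.mul_fderiv_weight_eq_zero hB hg y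
  have hzero := hg.1.eq_zero_or_eq_zero_of_mul_eq_zero
    (hf.1.apply_repDeriv hdf χg.toLinearMap) hmul
  rw [hdf]
  exact congrFun (hzero.resolve_left hg.2.1) x

theorem apply_bracket_differential_eq_zero (hB : B.IsAlt) (hf : IsSemiInvariant L B f χf)
    (hg : IsSemiInvariant L B g χg) (hdf : RepDeriv L f df) (hdg : RepDeriv L g dg)
    (y z : L →L[ℂ] ℂ) : z (B (df y) (dg z)) = 0 := by
  rw [hg.apply_bracket hdg, ← hdf, hf.fderiv_weight hB hg, zero_mul]

theorem frozen_bracket_eq_zero_of_ne (hB : B.IsAlt) (hf : IsSemiInvariant L B f χf)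
    (hg : IsSemiInvariant L B g χg) (hdf : RepDeriv L f df) (hdg : RepDeriv L g dg)
    (a x : L →L[ℂ] ℂ) {s t : ℂ} (hst : s ≠ t) :
    a (B (df (a + s • x)) (dg (a + t • x))) = 0 := by
  set y := a + s • x with hy
  set z := a + t • x with hz
  have hyB : y (B (df y) (dg z)) = 0 := by
    rw [← hB.neg, map_neg, apply_bracket_differential_eq_zero hB hg hf hdg hdf, neg_zero]
  have hzB := apply_bracket_differential_eq_zero hB hf hg hdf hdg y z
  have ha : (s - t) • a = s • z - t • y := by
    rw [hy, hz]
    module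
  have h : (s - t) * a (B (df y) (dg z)) = 0 := by
    simpa [hyB, hzB] using congrArg (· (B (df y) (dg z))) ha
  exact (mul_eq_zero.mp h).resolve_left (sub_ne_zero.mpr hst)

theorem frozen_bracket_eq_zero (hB : B.IsAlt) (hf : IsSemiInvariant L B f χf)
    (hg : IsSemiInvariant L B g χg) (hdf : RepDeriv L f df) (hdg : RepDeriv L g dg)
    (a x : L →L[ℂ] ℂ) (s t : ℂ) :
    a (B (df (a + s • x)) (dg (a + t • x))) = 0 := by
  have hpoly := hg.1.apply_repDeriv hdg (a.toLinearMap ∘ₗ B (df (a + s • x)))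
  have hcont : Continuous fun r : ℂ => a (B (df (a + s • x)) (dg (a + r • x))) :=
    hpoly.differentiable.continuous.comp (by fun_prop)
  have hzero := hcont.ext_on (dense_compl_singleton s) continuous_const fun r hr =>
    frozen_bracket_eq_zero_of_ne hB hf hg hdf hdg a x (Ne.symm hr)
  exact congrFun hzero t

end IsSemiInvariant

theorem shifts_of_semiInvariants_frozen_involution_general
    {B : L →ₗ[ℂ] L →ₗ[ℂ] L} (hB : B.IsAlt) {f g : (L →L[ℂ] ℂ) → ℂ} {χf χg : L →L[ℂ] ℂ}
    (hf : IsSemiInvariant L B f χf) (hg : IsSemiInvariant L B g χg)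
    {a : L →L[ℂ] ℂ} {lam mu : ℂ} {dF dG : (L →L[ℂ] ℂ) → L}
    (hdF : RepDeriv L (fun x => f (a + lam • x)) dF)
    (hdG : RepDeriv L (fun x => g (a + mu • x)) dG) (x : L →L[ℂ] ℂ) :
    a (B (dF x) (dG x)) = 0 := by
  obtain ⟨df, hdf⟩ := hf.1.exists_repDeriv
  obtain ⟨dg, hdg⟩ := hg.1.exists_repDeriv
  rw [hdF.unique (hdf.comp_add_smul a lam), hdG.unique (hdg.comp_add_smul a mu)]
  simp [hf.frozen_bracket_eq_zero hB hg hdf hdg]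

end LiePoisson

/-- Shifts of semi-invariants are in involution w.r.t. the frozen argument bracket
`{F,G}_a(x) = ⟨a, [dF(x), dG(x)]⟩`: for semi-invariants `f, g` and `λ, μ ∈ ℂ`, the functions
`F(x) = f(a + λx)` and `G(x) = g(a + μx)` satisfy `{F,G}_a(x) = 0` for all `x ∈ 𝔤*`. -/
theorem shifts_of_semiInvariants_frozen_involution
    {L : Type*} [NormedAddCommGroup L] [NormedSpace ℂ L] [FiniteDimensional ℂ L]
    (B : L →ₗ[ℂ] L →ₗ[ℂ] L) (hB : IsLieBracket L B)
    (f g : (L →L[ℂ] ℂ) → ℂ) (χf χg : L →L[ℂ] ℂ)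
    (hf : IsSemiInvariant L B f χf) (hg : IsSemiInvariant L B g χg)
    (a : L →L[ℂ] ℂ) (lam mu : ℂ)
    (F G : (L →L[ℂ] ℂ) → ℂ)
    (hF : F = fun x => f (a + lam • x)) (hG : G = fun x => g (a + mu • x))
    (dF dG : (L →L[ℂ] ℂ) → L)
    (hdF : RepDeriv L F dF) (hdG : RepDeriv L G dG) :
    ∀ x : L →L[ℂ] ℂ, a (B (dF x) (dG x)) = 0 := by
  subst hF hG
  exact shifts_of_semiInvariants_frozen_involution_general hB.1 hf hg hdF hdG
end

section
/- Let A ⊆ ℂ[x₁,…,xₙ] be a ℂ-subalgebra. Then for every point x ∈ ℂⁿ, the dimension of the ℂ-linear span of the set of gradients {∇f(x) : f ∈ A} is at most the transcendence degree of A over ℂ. -/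
/-- The transcendence degree of an `R`-algebra `A`: the supremum of the cardinalities of
subsets of `A` that are algebraically independent over `R`. -/
noncomputable def trdeg (R A : Type*) [CommRing R] [CommRing A] [Algebra R A] : Cardinal :=
  ⨆ s : {s : Set A // AlgebraicIndependent R ((↑) : s → A)}, Cardinal.mk s.1

/-!
It suffices to show that polynomials `fᵢ` whose gradients at a point `x` are linearly independent
are algebraically independent, and finitely many `fᵢ` can be treated at a time. Let `I` be the
maximal ideal of `y = (fᵢ(x))ᵢ` in `K[Yᵢ]`. Since the gradients are linearly independent, the
linear system `∇fᵢ(x) · u = Yᵢ - yᵢ` has a solution `u` with entries in `I`, and by first-order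
Taylor expansion the substitution `X ↦ x + u` sends `fᵢ` to `Yᵢ` modulo `I²`. Hence the composite
`K[Y] → K[X] → K[Y]` of `Yᵢ ↦ fᵢ` with this substitution is the identity modulo `I²`. It therefore
acts as the identity on every quotient `Iᵈ / Iᵈ⁺¹`, so its kernel lies in `⋂ Iᵈ`, which is zero by
Krull's intersection theorem.
-/

section AdicApproximation

variable {S : Type*} [CommRing S] {I : Ideal S} {φ : S →+* S}

theorem map_smodEq_of_mem_pow (hφ : ∀ a, φ a ≡ a [SMOD I ^ 2]) {d : ℕ} {a : S} (ha : a ∈ I ^ d) :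
    φ a ≡ a [SMOD I ^ (d + 1)] := by
  induction d generalizing a with
  | zero => exact (hφ a).mono (Ideal.pow_le_pow_right one_le_two)
  | succ d ih =>
    rw [pow_succ'] at ha
    induction ha using Submodule.mul_induction_on' with
    | mem_mul_mem a ha b hb =>
      have hφa : φ a ∈ I := by
        have h := Ideal.pow_le_self two_ne_zero (SModEq.sub_mem.1 (hφ a))
        exact (I.sub_mem_iff_left ha).1 h
      have hleft : φ a * (φ b - b) ∈ I ^ (d + 1 + 1) :=
        pow_succ' I (d + 1) ▸ Ideal.mul_mem_mul hφa (SModEq.sub_mem.1 (ih hb))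
      have hright : (φ a - a) * b ∈ I ^ (d + 1 + 1) := by
        rw [show d + 1 + 1 = 2 + d by ring, pow_add]
        exact Ideal.mul_mem_mul (SModEq.sub_mem.1 (hφ a)) hb
      rw [SModEq.sub_mem, map_mul]
      convert add_mem hleft hright using 1
      ring
    | add a _ b _ iha ihb => simpa only [map_add] using iha.add ihb

theorem injective_of_map_smodEq_sq (hI : ⨅ d : ℕ, I ^ d = ⊥) (hφ : ∀ a, φ a ≡ a [SMOD I ^ 2]) :
    Function.Injective φ := by
  refine (injective_iff_map_eq_zero φ).2 fun a ha => ?_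
  have hmem (d : ℕ) : a ∈ I ^ d := by
    induction d with
    | zero => simp
    | succ d ih => exact SModEq.zero.1 (ha ▸ (map_smodEq_of_mem_pow hφ ih).symm)
  rw [← Ideal.mem_bot, ← hI, Ideal.mem_iInf]
  exact hmem

end AdicApproximation

theorem exists_finsupp_sum_smul_eq_of_linearIndependent {ι σ K M : Type*} [Finite ι] [Field K]
    [AddCommGroup M] [Module K M] {v : ι → σ → K} (hv : LinearIndependent K v) (t : ι → M) :
    ∃ u : σ →₀ M, ∀ i, (u.sum fun r a => v i r • a) = t i := by
  classical
  have := Fintype.ofFinite ι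
  have hsurj : Function.Surjective (Finsupp.linearCombination K (flip v)) := by
    rw [← LinearMap.range_eq_top, Finsupp.range_linearCombination]
    exact span_flip_eq_top_iff_linearIndependent.2 hv
  choose w hw using fun j => hsurj (Pi.single j 1)
  have hdual (i j : ι) : ((w j).sum fun r c => v i r * c) = (Pi.single j 1 : ι → K) i := by
    rw [← hw j, Finsupp.linearCombination_apply, Finsupp.sum_apply']
    simp [flip, mul_comm]
  refine ⟨∑ j, (w j).mapRange (· • t j) (zero_smul K _), fun i => ?_⟩
  calc ((∑ j, (w j).mapRange (· • t j) (zero_smul K _)).sum fun r a => v i r • a)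
      _ = ∑ j, ((w j).sum fun r c => v i r * c) • t j := by
        rw [← Finsupp.sum_finsetSum_index (by simp) (by simp)]
        refine Finset.sum_congr rfl fun j _ => ?_
        rw [Finsupp.sum_mapRange_index (by simp), Finsupp.sum, Finsupp.sum, Finset.sum_smul]
        simp only [mul_smul]
      _ = t i := by simp [hdual, Pi.single_apply]

open MvPolynomial

section Gradient

variable {σ R : Type*} [CommSemiring R]

/-- The gradient `∇f(x)` of a polynomial `f` at the point `x`, as the family of values of its
partial derivatives; there may be infinitely many variables. -/
noncomputable def gradientAt (x : σ → R) (f : MvPolynomial σ R) : σ → R :=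
  fun r => eval x (pderiv r f)

theorem gradientAt_C (x : σ → R) (c : R) : gradientAt x (C c) = 0 := by
  ext
  simp [gradientAt]

theorem gradientAt_add (x : σ → R) (f g : MvPolynomial σ R) :
    gradientAt x (f + g) = gradientAt x f + gradientAt x g := by
  ext
  simp [gradientAt]

theorem gradientAt_mul (x : σ → R) (f g : MvPolynomial σ R) :
    gradientAt x (f * g) = eval x f • gradientAt x g + eval x g • gradientAt x f := by
  ext
  simp [gradientAt]

theorem gradientAt_X [DecidableEq σ] (x : σ → R) (r : σ) :
    gradientAt x (X r) = Pi.single r 1 := by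
  ext s
  rw [gradientAt, pderiv_X, Pi.single_comm, Pi.apply_single (fun _ => eval x) fun _ => map_zero _,
    map_one]

theorem aeval_add_smodEq_add_sum_gradientAt {S : Type*} [CommRing S] [Algebra R S]
    (x : σ → R) {I : Ideal S} (u : σ →₀ I) (f : MvPolynomial σ R) :
    aeval (fun r => algebraMap R S (x r) + u r) f ≡
      algebraMap R S (eval x f) + (u.sum fun r a => gradientAt x f r • a : I) [SMOD I ^ 2] := by
  classical
  induction f using MvPolynomial.induction_on with
  | C c => simp [gradientAt_C]
  | add p q hp hq =>
    convert! hp.add hq using 1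
    · exact map_add ..
    · simp only [gradientAt_add, map_add, Pi.add_apply, add_smul, Finsupp.sum_add,
        Submodule.coe_add]
      ring
  | mul_X p s hp =>
    have hsingle : (u.sum fun r a => (Pi.single s 1 : σ → R) r • a) = u s := by
      simpa [Pi.single_apply] using Eq.symm
    have hleibniz : (u.sum fun r a => gradientAt x (p * X s) r • a) =
        eval x p • u s + x s • u.sum fun r a => gradientAt x p r • a := by
      rw [← hsingle]
      simp only [gradientAt_mul, gradientAt_X, eval_X, Pi.add_apply, Pi.smul_apply, smul_eq_mul,
        add_smul, mul_smul, Finsupp.sum_add, Finsupp.smul_sum]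
    have hsq : ((u.sum fun r a => gradientAt x p r • a : I) : S) * u s ∈ I ^ 2 :=
      sq I ▸ Ideal.mul_mem_mul (Submodule.coe_mem _) (Submodule.coe_mem _)
    rw [map_mul, aeval_X, hleibniz]
    refine (hp.mul SModEq.rfl).trans (SModEq.sub_mem.2 ?_)
    convert hsq using 1
    simp only [Algebra.smul_def, map_mul, eval_X, Submodule.coe_add, Submodule.coe_smul_of_tower]
    ring

end Gradient

section JacobianCriterion

variable {ι σ K : Type*} [Field K] {f : ι → MvPolynomial σ K} {x : σ → K}

theorem exists_algHom_smodEq_X [Finite ι]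
    (h : LinearIndependent K fun i => gradientAt x (f i)) :
    ∃ ψ : MvPolynomial σ K →ₐ[K] MvPolynomial ι K,
      ∀ i, ψ (f i) ≡ X i [SMOD RingHom.ker (eval fun i => eval x (f i)) ^ 2] := by
  let I := RingHom.ker (eval (R := K) fun i => eval x (f i))
  have hmem (i : ι) : X i - C (eval x (f i)) ∈ I := by simp [I, RingHom.mem_ker]
  obtain ⟨u, hu⟩ := exists_finsupp_sum_smul_eq_of_linearIndependent h fun i => (⟨_, hmem i⟩ : I)
  refine ⟨aeval fun r => algebraMap K _ (x r) + (u r : MvPolynomial ι K), fun i => ?_⟩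
  have htaylor := aeval_add_smodEq_add_sum_gradientAt x u (f i)
  rwa [hu, algebraMap_eq, add_sub_cancel] at htaylor

theorem algebraicIndependent_of_linearIndependent_gradientAt_of_finite [Finite ι]
    (h : LinearIndependent K fun i => gradientAt x (f i)) : AlgebraicIndependent K f := by
  let I := RingHom.ker (eval (R := K) fun i => eval x (f i))
  have hkrull : ⨅ d : ℕ, I ^ d = ⊥ := I.iInf_pow_eq_bot_of_isDomain (RingHom.ker_ne_top _)
  obtain ⟨ψ, hψ⟩ := exists_algHom_smodEq_X h
  have hcomp : (Ideal.Quotient.mkₐ K (I ^ 2)).comp (ψ.comp (aeval f)) =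
      Ideal.Quotient.mkₐ K (I ^ 2) := by
    ext i
    simpa using SModEq.idealQuotientMk.1 (hψ i)
  have hinj := injective_of_map_smodEq_sq (φ := (ψ.comp (aeval f)).toRingHom) hkrull
    fun p => DFunLike.congr_fun hcomp p
  exact Function.Injective.of_comp (f := ψ) hinj

theorem algebraicIndependent_of_linearIndependent_gradientAt
    (h : LinearIndependent K fun i => gradientAt x (f i)) : AlgebraicIndependent K f :=
  algebraicIndependent_of_finite_type fun _ ht =>
    have := ht.to_subtype
    algebraicIndependent_of_linearIndependent_gradientAt_of_finite
      (h.comp _ Subtype.val_injective)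

end JacobianCriterion

theorem rank_span_gradients_le_trdeg_general {σ K : Type*} [Field K]
    (A : Subalgebra K (MvPolynomial σ K)) (x : σ → K) :
    Module.rank K (Submodule.span K {v : σ → K | ∃ f ∈ A, v = gradientAt x f}) ≤ trdeg K A := by
  obtain ⟨b, hb, hspan, hlin⟩ :=
    exists_linearIndependent K {v : σ → K | ∃ f ∈ A, v = gradientAt x f}
  choose g hgA hg using fun v : b => hb v.2
  have hind : AlgebraicIndependent K g :=
    algebraicIndependent_of_linearIndependent_gradientAt (x := x) (funext hg ▸ hlin)
  have hindA : AlgebraicIndependent K fun v : b => (⟨g v, hgA v⟩ : A) := .of_comp A.val hind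
  rw [← hspan, rank_span_set hlin]
  exact hindA.cardinalMk_le_trdeg

/-- For a `ℂ`-subalgebra `A ⊆ ℂ[x₁,…,xₙ]` and any point `x ∈ ℂⁿ`, the dimension of the
span of the gradients `∇f(x)`, `f ∈ A`, is at most the transcendence degree of `A` over `ℂ`. -/
theorem rank_span_gradients_le_trdeg
    {n : ℕ} (A : Subalgebra ℂ (MvPolynomial (Fin n) ℂ)) (x : Fin n → ℂ) :
    Module.rank ℂ
        (Submodule.span ℂ {v : Fin n → ℂ | ∃ f ∈ A,
          v = fun r : Fin n => MvPolynomial.eval x (MvPolynomial.pderiv r f)}) ≤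
      trdeg ℂ A :=
  rank_span_gradients_le_trdeg_general A x
end
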